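/- Let n ≥ 2, 1 ≤ s ≤ n, let a₁,…,a_{s−1} be nonzero real numbers and b ∈ ℝ, and let L ⊆ ℝⁿ be the hyperplane parameterized by f(x₁,…,x_{n−1}) = (x₁,…,x_{n−1}, a₁x₁+⋯+a_{s−1}x_{s−1}+b). Then ω×(L) = inf{ω×(y) : y ∈ L}. -/

import Mathlib

open Filter MeasureTheory Metric Set BigOperators

/-- Π×(q) = ∏_{i : qᵢ ≠ 0} |qᵢ| (empty product = 1). -/
noncomputable def prodTimes {n : ℕ} (q : Fin n → ℤ) : ℝ :=
  ∏ i, if q i = 0 then 1 else |(q i : ℝ)|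

/-- Multiplicative Diophantine exponent ω×(y): the sup (in the extended reals) of all
v ∈ ℝ such that there are infinitely many q ∈ ℤⁿ with |q·y + p| < Π×(q)^{-v/n}
for some p ∈ ℤ. -/
noncomputable def omegaT {n : ℕ} (y : Fin n → ℝ) : EReal :=
  sSup {w : EReal | ∃ v : ℝ, w = (v : EReal) ∧
    {q : Fin n → ℤ | ∃ p : ℤ, |(∑ i, (q i : ℝ) * y i) + (p : ℝ)| <
      (prodTimes q) ^ (-(v / (n : ℝ)))}.Infinite}

/-- ω×(μ) for a measure: sup{v : μ{y : ω×(y) > v} > 0}. -/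
noncomputable def omegaTMeas {n : ℕ} (μ : Measure (Fin n → ℝ)) : EReal :=
  sSup {w : EReal | ∃ v : ℝ, w = (v : EReal) ∧ 0 < μ {y | (v : EReal) < omegaT y}}

/-- The signed distance from `N * β i` to the nearest integer. -/
noncomputable def roundErr {ι : Type*} (β : ι → ℝ) (N : ℕ) (i : ι) : ℝ :=
  N * β i - round (N * β i)

/-- The sup-norm distance from `N • β` to the integer lattice. -/
noncomputable def distInt {ι : Type*} [Fintype ι] (β : ι → ℝ) (N : ℕ) : ℝ :=
  ‖roundErr β N‖

section distInt

variable {ι : Type*} [Fintype ι] {β : ι → ℝ}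

lemma abs_roundErr_le_distInt (N : ℕ) (i : ι) : |roundErr β N i| ≤ distInt β N :=
  norm_le_pi_norm (roundErr β N) i

lemma distInt_le {N : ℕ} {D : ℝ} (hD : 0 ≤ D) (k : ι → ℤ)
    (h : ∀ i, |N * β i - k i| ≤ D) : distInt β N ≤ D :=
  (pi_norm_le_iff_of_nonneg hD).2 fun i => (round_le _ (k i)).trans (h i)

lemma distInt_nonneg (N : ℕ) : 0 ≤ distInt β N := norm_nonneg _

lemma distInt_pos {t : ℝ} (hfin : {N : ℕ | distInt β N < (N : ℝ) ^ (-t)}.Finite)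
    {N : ℕ} (hN : 1 ≤ N) : 0 < distInt β N := by
  by_contra! h
  refine Set.infinite_of_injective_forall_mem (f := fun k : ℕ => (k + 1) * N) ?_ ?_ hfin
  · intro k l hkl
    simpa [Nat.pos_iff_ne_zero.1 hN] using hkl
  · intro k
    have h1 : distInt β ((k + 1) * N) ≤ 0 := by
      refine distInt_le le_rfl (fun i => (k + 1) * round (N * β i)) fun i => ?_
      have h2 : roundErr β N i = 0 :=
        abs_nonpos_iff.1 ((abs_roundErr_le_distInt N i).trans h)
      have h3 : (((k + 1) * N : ℕ) : ℝ) * β i - (((k + 1) * round (N * β i) : ℤ) : ℝ)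
          = (k + 1) * roundErr β N i := by
        simp only [roundErr]; push_cast; ring
      rw [h3, h2]; simp
    have h4 : (0 : ℝ) < (((k + 1) * N : ℕ) : ℝ) := by
      exact_mod_cast Nat.mul_pos k.succ_pos hN
    exact h1.trans_lt (Real.rpow_pos_of_pos h4 _)

lemma exists_forall_mul_rpow_le_distInt {t : ℝ}
    (hfin : {N : ℕ | distInt β N < (N : ℝ) ^ (-t)}.Finite) :
    ∃ c > 0, ∀ N : ℕ, 1 ≤ N → c * (N : ℝ) ^ (-t) ≤ distInt β N := by
  have h1 : ∀ᶠ c in nhdsWithin (0 : ℝ) (Ioi 0),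
      ∀ N ∈ {N : ℕ | distInt β N < (N : ℝ) ^ (-t)}, 1 ≤ N →
        c * (N : ℝ) ^ (-t) ≤ distInt β N := by
    rw [eventually_all_finite hfin]
    intro N _
    by_cases hN : 1 ≤ N
    · have h2 : Tendsto (fun c : ℝ => c * (N : ℝ) ^ (-t)) (nhdsWithin 0 (Ioi 0)) (nhds 0) := by
        have : Continuous fun c : ℝ => c * (N : ℝ) ^ (-t) := by fun_prop
        simpa using (this.tendsto 0).mono_left nhdsWithin_le_nhds
      filter_upwards [h2.eventually_le_const (distInt_pos hfin hN)] with c hc _ using hc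
    · simp [hN]
  have h3 : ∀ᶠ c in nhdsWithin (0 : ℝ) (Ioi 0), c ≤ 1 :=
    (eventually_le_nhds zero_lt_one).filter_mono nhdsWithin_le_nhds
  obtain ⟨c, ⟨hc, hc1⟩, hc0⟩ := ((h1.and h3).and self_mem_nhdsWithin).exists
  refine ⟨c, hc0, fun N hN => ?_⟩
  by_cases h : distInt β N < (N : ℝ) ^ (-t)
  · exact hc N h hN
  · push Not at h
    refine le_trans ?_ h
    exact mul_le_of_le_one_left (Real.rpow_nonneg (Nat.cast_nonneg _) _) hc1

/-- If more than `(K + 1) ^ (#J + 1)` integers `N ≤ Q` satisfy `distInt β N ≤ D`, two of them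
differ by some `M < Q / K` with `distInt β M ≤ 2 * D / K`. -/
lemma exists_distInt_le_of_card_lt {J : Finset ι} (hJ : ∀ i ∉ J, β i = 0)
    {S : Finset ℕ} {Q K : ℕ} {D : ℝ} (hQ : 1 ≤ Q) (hK : 1 ≤ K) (hD : 0 < D)
    (hS : ∀ N ∈ S, 1 ≤ N ∧ N ≤ Q ∧ distInt β N ≤ D) (hcard : (K + 1) ^ (J.card + 1) < S.card) :
    ∃ M : ℕ, 1 ≤ M ∧ (M : ℝ) * K ≤ Q ∧ distInt β M ≤ 2 * D / K := by
  classical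
  have hQ0 : (0 : ℝ) < Q := by exact_mod_cast hQ
  have hK0 : (0 : ℝ) < K := by exact_mod_cast hK
  let F : ℕ → ℕ × (ι → ℕ) := fun N =>
    (⌊(K : ℝ) * N / Q⌋₊,
      fun i => if i ∈ J then ⌊K * (roundErr β N i + D) / (2 * D)⌋₊ else 0)
  let T : Finset (ℕ × (ι → ℕ)) :=
    Finset.range (K + 1) ×ˢ
      Fintype.piFinset fun i => if i ∈ J then Finset.range (K + 1) else {0}
  have hT : T.card = (K + 1) ^ (J.card + 1) := by
    simp only [T, Finset.card_product, Finset.card_range, Fintype.card_piFinset]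
    have : ∀ i, (if i ∈ J then Finset.range (K + 1) else {0}).card
        = if i ∈ J then K + 1 else 1 := by
      intro i; split_ifs <;> simp
    simp only [this]
    rw [Finset.prod_ite_mem]
    simp [pow_succ, mul_comm]
  have hpos : ∀ N ∈ S, ∀ i, 0 ≤ K * (roundErr β N i + D) / (2 * D) := by
    intro N hN i
    have := (abs_le.1 ((abs_roundErr_le_distInt N i).trans (hS N hN).2.2)).1
    have : 0 ≤ roundErr β N i + D := by linarith
    positivity
  have hmaps : ∀ N ∈ S, F N ∈ T := by
    intro N hN
    simp only [F, T, Finset.mem_product, Fintype.mem_piFinset, Finset.mem_range]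
    refine ⟨?_, fun i => ?_⟩
    · rw [Nat.lt_succ_iff]
      refine Nat.floor_le_of_le ?_
      rw [div_le_iff₀ hQ0]
      have : (N : ℝ) ≤ Q := by exact_mod_cast (hS N hN).2.1
      gcongr
    · split_ifs with hi
      · rw [Finset.mem_range, Nat.lt_succ_iff]
        refine Nat.floor_le_of_le ?_
        have := (abs_le.1 ((abs_roundErr_le_distInt N i).trans (hS N hN).2.2)).2
        rw [div_le_iff₀ (by positivity)]
        have : roundErr β N i + D ≤ 2 * D := by linarith
        gcongr
      · simp
  have hfl : ∀ u v : ℝ, 0 ≤ u → 0 ≤ v → ⌊u⌋₊ = ⌊v⌋₊ → |u - v| < 1 := by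
    intro u v hu hv h
    have h1 := Nat.floor_le hu
    have h2 := Nat.floor_le hv
    have h3 := Nat.lt_floor_add_one u
    have h4 := Nat.lt_floor_add_one v
    rw [h] at h1 h3
    rw [abs_lt]; constructor <;> linarith
  have key : ∀ N ∈ S, ∀ N' ∈ S, N < N' → F N = F N' →
      ∃ M : ℕ, 1 ≤ M ∧ (M : ℝ) * K ≤ Q ∧ distInt β M ≤ 2 * D / K := by
    intro N hN N' hN' hlt hF
    simp only [F, Prod.mk.injEq] at hF
    have hcast : ((N' - N : ℕ) : ℝ) = N' - N := Nat.cast_sub hlt.le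
    refine ⟨N' - N, by omega, ?_, ?_⟩
    · have h1 := hfl _ _ (by positivity) (by positivity) hF.1
      have h2 := (abs_lt.1 h1).1
      have h3 : (K : ℝ) * N' / Q - K * N / Q < 1 := by linarith
      rw [← sub_div, div_lt_one hQ0] at h3
      rw [hcast]; linarith
    · refine distInt_le (by positivity)
        (fun i => round (N' * β i) - round (N * β i)) fun i => ?_
      by_cases hi : i ∈ J
      · have h0 := congrFun hF.2 i
        simp only [hi, if_true] at h0
        have h1 := hfl _ _ (hpos N hN i) (hpos N' hN' i) h0
        rw [← sub_div, abs_div, abs_of_pos (show (0 : ℝ) < 2 * D by positivity),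
          div_lt_one (by positivity), ← mul_sub, abs_mul, abs_of_pos hK0] at h1
        rw [le_div_iff₀ hK0, hcast]
        push_cast
        have h2 : ((N' : ℝ) - N) * β i - (round (N' * β i) - round (N * β i))
            = -((roundErr β N i + D) - (roundErr β N' i + D)) := by
          simp only [roundErr]; ring
        rw [h2, abs_neg]
        linarith
      · simp only [hJ i hi, mul_zero, round_zero, Int.cast_zero, sub_zero, abs_zero]
        positivity
  obtain ⟨N, hN, N', hN', hne, hF⟩ :=
    Finset.exists_ne_map_eq_of_card_lt_of_maps_to (by rw [hT]; exact hcard) hmaps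
  rcases lt_or_gt_of_ne hne with h | h
  · exact key N hN N' hN' h hF
  · exact key N' hN' N hN h hF.symm

lemma card_distInt_le {J : Finset ι} (hJ : ∀ i ∉ J, β i = 0) {t c : ℝ} (ht : (J.card : ℝ) ≤ t)
    (hc : 0 < c) (h : ∀ N : ℕ, 1 ≤ N → c * (N : ℝ) ^ (-t) ≤ distInt β N)
    {S : Finset ℕ} {Q : ℕ} {D : ℝ} (hD : 0 < D)
    (hS : ∀ N ∈ S, 1 ≤ N ∧ N ≤ Q ∧ distInt β N ≤ D) :
    (S.card : ℝ) ≤ 3 ^ (t + 1) * (3 / c) * (Q : ℝ) ^ t * D := by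
  have ht0 : 0 ≤ t := (Nat.cast_nonneg _).trans ht
  rcases S.eq_empty_or_nonempty with rfl | ⟨N₀, hN₀⟩
  · simp only [Finset.card_empty, Nat.cast_zero]; positivity
  obtain ⟨hN1, hNQ, hND⟩ := hS N₀ hN₀
  have hQ : 1 ≤ Q := hN1.trans hNQ
  have hQ0 : (0 : ℝ) < Q := by exact_mod_cast hQ
  have hQt : (0 : ℝ) < (Q : ℝ) ^ t := Real.rpow_pos_of_pos hQ0 _
  set Y : ℝ := 3 * D / c * (Q : ℝ) ^ t with hY
  have hY0 : 0 < Y := by positivity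
  have hY1 : 1 ≤ Y := by
    have h1 : c * (Q : ℝ) ^ (-t) ≤ D := by
      refine le_trans ?_ ((h N₀ hN1).trans hND)
      gcongr ?_ * ?_
      exact Real.rpow_le_rpow_of_nonpos (by exact_mod_cast hN1) (by exact_mod_cast hNQ)
        (by linarith)
    rw [Real.rpow_neg hQ0.le, ← div_eq_mul_inv, div_le_iff₀ hQt] at h1
    rw [hY, div_mul_eq_mul_div, one_le_div hc]
    nlinarith [mul_pos hD hQt]
  set X : ℝ := Y ^ (1 / (t + 1)) with hX
  have hX1 : 1 ≤ X := Real.one_le_rpow hY1 (by positivity)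
  have hXY : X ^ (t + 1) = Y := by
    rw [hX, ← Real.rpow_mul hY0.le, one_div_mul_cancel (by positivity), Real.rpow_one]
  set K : ℕ := ⌈X⌉₊ with hK
  have hXK : X ≤ K := Nat.le_ceil X
  have hK1 : 1 ≤ K := by exact_mod_cast hX1.trans hXK
  have hK0 : (0 : ℝ) < K := by exact_mod_cast hK1
  have hKX : (K : ℝ) + 1 ≤ 3 * X := by
    have := Nat.ceil_lt_add_one (zero_le_one.trans hX1)
    linarith
  have hcard : S.card ≤ (K + 1) ^ (J.card + 1) := by
    by_contra! hlt
    obtain ⟨M, hM1, hMK, hMD⟩ := exists_distInt_le_of_card_lt hJ hQ hK1 hD hS hlt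
    have hM0 : (0 : ℝ) < M := by exact_mod_cast hM1
    have h1 := (h M hM1).trans hMD
    rw [Real.rpow_neg hM0.le, ← div_eq_mul_inv, div_le_div_iff₀ (by positivity) hK0] at h1
    have h2 : (M : ℝ) ^ t * (K : ℝ) ^ t ≤ (Q : ℝ) ^ t := by
      rw [← Real.mul_rpow hM0.le hK0.le]
      exact Real.rpow_le_rpow (by positivity) hMK ht0
    have h3 : Y ≤ (K : ℝ) ^ t * K := by
      rw [← Real.rpow_add_one hK0.ne', ← hXY]
      exact Real.rpow_le_rpow (by positivity) hXK (by positivity)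
    rw [hY, div_mul_eq_mul_div, div_le_iff₀ hc] at h3
    have h4 : (K : ℝ) ^ t * K * c ≤ 2 * D * (Q : ℝ) ^ t := by
      calc (K : ℝ) ^ t * K * c = (K : ℝ) ^ t * (c * K) := by ring
        _ ≤ (K : ℝ) ^ t * (2 * D * (M : ℝ) ^ t) := by gcongr
        _ = 2 * D * ((M : ℝ) ^ t * (K : ℝ) ^ t) := by ring
        _ ≤ _ := by gcongr
    nlinarith [mul_pos hD hQt]
  calc (S.card : ℝ) ≤ ((K : ℝ) + 1) ^ (J.card + 1) := by exact_mod_cast hcard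
    _ = ((K : ℝ) + 1) ^ ((J.card : ℝ) + 1) := by
      rw [← Real.rpow_natCast]; push_cast; rfl
    _ ≤ ((K : ℝ) + 1) ^ (t + 1) :=
      Real.rpow_le_rpow_of_exponent_le (by linarith) (by linarith)
    _ ≤ (3 * X) ^ (t + 1) := Real.rpow_le_rpow (by positivity) hKX (by positivity)
    _ = 3 ^ (t + 1) * (3 / c) * (Q : ℝ) ^ t * D := by
      rw [Real.mul_rpow (by norm_num) (by positivity), hXY, hY]; ring

lemma sum_inv_le_mul_harmonic {κ : Type*} (S : Finset κ) (g : κ → ℝ) {A : ℝ}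
    (hg : ∀ i ∈ S, 0 < g i)
    (h : ∀ D > 0, ∀ S' ⊆ S, (∀ i ∈ S', g i ≤ D) → (S'.card : ℝ) ≤ A * D) :
    ∑ i ∈ S, (g i)⁻¹ ≤ A * (harmonic S.card : ℝ) := by
  classical
  revert hg h
  refine Finset.induction_on_max_value g S (by simp) ?_
  · intro a s has hmax ih hg h
    have ih' := ih (fun i hi => hg i (Finset.mem_insert_of_mem hi))
      (fun D hD S' hS' => h D hD S' (hS'.trans (Finset.subset_insert _ _)))
    have hga := hg a (Finset.mem_insert_self _ _)
    have h1 := h (g a) hga (insert a s) subset_rfl (by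
      intro i hi
      rcases Finset.mem_insert.1 hi with rfl | hi
      · exact le_rfl
      · exact hmax i hi)
    rw [Finset.card_insert_of_notMem has] at h1 ⊢
    rw [Finset.sum_insert has, harmonic_succ]
    push_cast at h1 ⊢
    have h2 : (g a)⁻¹ ≤ A * ((s.card : ℝ) + 1)⁻¹ := by
      rw [← div_eq_mul_inv, inv_eq_one_div, div_le_div_iff₀ hga (by positivity)]
      linarith
    linarith

lemma summable_rpow_mul_inv_distInt {J : Finset ι} (hJ : ∀ i ∉ J, β i = 0) {t τ : ℝ}
    (ht : (J.card : ℝ) ≤ t) (htτ : t < τ)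
    (hfin : {N : ℕ | distInt β N < (N : ℝ) ^ (-t)}.Finite) :
    Summable fun N : ℕ => (N : ℝ) ^ (-τ) * (distInt β N)⁻¹ := by
  have ht0 : 0 ≤ t := (Nat.cast_nonneg _).trans ht
  obtain ⟨c, hc, h⟩ := exists_forall_mul_rpow_le_distInt hfin
  obtain ⟨u, htu, huτ⟩ := exists_between htτ
  set B : ℝ := 3 ^ (t + 1) * (3 / c) with hB
  have hB0 : 0 < B := by positivity
  have hsum : ∀ Q : ℕ, ∑ N ∈ Finset.Icc 1 Q, (distInt β N)⁻¹
      ≤ B * (Q : ℝ) ^ t * (1 + Real.log Q) := by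
    intro Q
    refine (sum_inv_le_mul_harmonic (Finset.Icc 1 Q) (distInt β) (A := B * (Q : ℝ) ^ t)
      (fun i hi => distInt_pos hfin (Finset.mem_Icc.1 hi).1) ?_).trans ?_
    · intro D hD S' hS' hle
      exact card_distInt_le hJ ht hc h hD fun N hN =>
        ⟨(Finset.mem_Icc.1 (hS' hN)).1, (Finset.mem_Icc.1 (hS' hN)).2, hle N hN⟩
    · rw [Nat.card_Icc, Nat.add_sub_cancel]
      gcongr
      exact harmonic_le_one_add_log Q
  have hO : (fun Q : ℕ => ∑ N ∈ Finset.Icc 1 Q, ‖(((distInt β N)⁻¹ : ℝ) : ℂ)‖)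
      =O[atTop] fun Q : ℕ => (Q : ℝ) ^ u := by
    have h1 : (fun x : ℝ => B * x ^ t * (1 + Real.log x)) =O[atTop] fun x : ℝ => x ^ u := by
      have h2 : (fun x : ℝ => 1 + Real.log x) =O[atTop] fun x : ℝ => x ^ (u - t) := by
        refine Asymptotics.IsBigO.add ?_ (isLittleO_log_rpow_atTop (sub_pos.2 htu)).isBigO
        exact (Asymptotics.isLittleO_const_left.2 <| Or.inr <| tendsto_norm_atTop_atTop.comp <|
          tendsto_rpow_atTop (sub_pos.2 htu)).isBigO
      have h3 := ((Asymptotics.isBigO_refl (fun x : ℝ => x ^ t) atTop).const_mul_left B).mul h2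
      refine h3.congr' EventuallyEq.rfl ?_
      filter_upwards [eventually_gt_atTop 0] with x hx
      rw [← Real.rpow_add hx]; congr 1; ring
    refine Asymptotics.IsBigO.trans ?_ (h1.comp_tendsto tendsto_natCast_atTop_atTop)
    refine Asymptotics.isBigO_of_le _ fun Q => ?_
    have h4 : ∀ N, ‖(((distInt β N)⁻¹ : ℝ) : ℂ)‖ = (distInt β N)⁻¹ := fun N => by
      rw [Complex.norm_real, Real.norm_of_nonneg (inv_nonneg.2 (distInt_nonneg N))]
    simp only [h4, Function.comp]
    rw [Real.norm_of_nonneg (Finset.sum_nonneg fun N _ => inv_nonneg.2 (distInt_nonneg N))]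
    exact (hsum Q).trans (Real.le_norm_self _)
  have hL := LSeriesSummable_of_sum_norm_bigO (s := (τ : ℂ)) hO (ht0.trans htu.le) (by simpa)
  refine (summable_nat_add_iff 1).1 ?_
  refine ((summable_nat_add_iff 1).2 hL.norm).congr fun N => ?_
  rw [LSeries.term_of_ne_zero (Nat.succ_ne_zero N), norm_div, Complex.norm_real,
    Real.norm_of_nonneg (inv_nonneg.2 (distInt_nonneg _)),
    Complex.norm_natCast_cpow_of_pos N.succ_pos, Complex.ofReal_re,
    Real.rpow_neg (Nat.cast_nonneg _)]
  rw [div_eq_mul_inv, mul_comm]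

end distInt
/-- The volume of the part of a cube lying in a slab around an affine hyperplane. -/
lemma volume_slab_le {m : ℕ} (c : Fin m → ℝ) (d ε R : ℝ) (hR : 0 ≤ R) (i : Fin m)
    (hi : c i ≠ 0) :
    volume {x : Fin m → ℝ | (∀ j, |x j| < R) ∧ |∑ j, c j * x j + d| < ε}
      ≤ ENNReal.ofReal ((2 * R) ^ (m - 1) * (2 * ε) / |c i|) := by
  classical
  let M : Matrix (Fin m) (Fin m) ℝ := (1 : Matrix (Fin m) (Fin m) ℝ).updateRow i c
  have hdet : LinearMap.det (Matrix.toLin' M) = c i := by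
    rw [LinearMap.det_toLin', ← Matrix.cramer_transpose_apply, Matrix.transpose_one,
      Matrix.cramer_one]
    rfl
  let s : Set (Fin m → ℝ) := Set.pi univ fun j =>
    Ioo (if j = i then -d - ε else -R) (if j = i then -d + ε else R)
  have hsub : {x : Fin m → ℝ | (∀ j, |x j| < R) ∧ |∑ j, c j * x j + d| < ε}
      ⊆ Matrix.toLin' M ⁻¹' s := by
    rintro x ⟨hx, hx'⟩ j -
    rw [Matrix.toLin'_apply]
    by_cases hj : j = i
    · subst hj
      have : (M.mulVec x) j = ∑ k, c k * x k := by
        simp [M, Matrix.mulVec, dotProduct]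
      rw [abs_lt] at hx'
      simp only [this, if_true, mem_Ioo]
      constructor <;> linarith
    · have : (M.mulVec x) j = x j := by
        simp [M, Matrix.mulVec, dotProduct, hj, Matrix.one_apply]
      simp only [this, hj, if_false, mem_Ioo]
      exact abs_lt.1 (hx j)
  refine (measure_mono hsub).trans ?_
  rw [Measure.addHaar_preimage_linearMap _ (by rwa [hdet]), hdet, Real.volume_pi_Ioo]
  have hprod : ∏ j, ENNReal.ofReal ((if j = i then -d + ε else R) - (if j = i then -d - ε else -R))
      = ENNReal.ofReal (2 * R) ^ (m - 1) * ENNReal.ofReal (2 * ε) := by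
    rw [← Finset.prod_erase_mul _ _ (Finset.mem_univ i)]
    congr 1
    · rw [Finset.prod_congr rfl (g := fun _ => ENNReal.ofReal (2 * R))]
      · simp
      · intro j hj
        simp only [Finset.ne_of_mem_erase hj, if_false]
        congr 1; ring
    · simp only [if_true]; congr 1; ring
  rw [hprod, ← ENNReal.ofReal_pow (by positivity), ← ENNReal.ofReal_mul (by positivity),
    ← ENNReal.ofReal_mul (by positivity), abs_inv]
  apply le_of_eq
  congr 1
  ring

lemma volume_slab_int_le {m : ℕ} (c : Fin m → ℝ) (d : ℝ) {ε R κ : ℝ} (hR : 0 ≤ R) (hκ : 0 < κ)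
    (hε : 0 < ε) (hε1 : ε ≤ 1) (i : Fin m) (hi : κ ≤ |c i|) (hmax : ∀ j, |c j| ≤ |c i|) :
    volume {x : Fin m → ℝ | (∀ j, |x j| < R) ∧ ∃ p : ℤ, |∑ j, c j * x j + (d + p)| < ε}
      ≤ ENNReal.ofReal ((2 * R) ^ (m - 1) * 2 * (2 * m * R + 3 / κ) * ε) := by
  have hci : 0 < |c i| := hκ.trans_le hi
  set T : ℝ := m * R * |c i| + 1 with hT
  have hT0 : 0 < T := by positivity
  set P : Finset ℤ := Finset.Icc ⌈-d - T⌉ ⌊-d + T⌋ with hP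
  have hsub : {x : Fin m → ℝ | (∀ j, |x j| < R) ∧ ∃ p : ℤ, |∑ j, c j * x j + (d + p)| < ε}
      ⊆ ⋃ p ∈ P, {x : Fin m → ℝ | (∀ j, |x j| < R) ∧ |∑ j, c j * x j + (d + p)| < ε} := by
    rintro x ⟨hx, p, hp⟩
    refine mem_iUnion₂.2 ⟨p, ?_, hx, hp⟩
    have h1 : |∑ j, c j * x j| ≤ m * R * |c i| := by
      calc |∑ j, c j * x j| ≤ ∑ j, |c j * x j| := Finset.abs_sum_le_sum_abs _ _
        _ ≤ ∑ _j : Fin m, |c i| * R := by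
          refine Finset.sum_le_sum fun j _ => ?_
          rw [abs_mul]
          exact mul_le_mul (hmax j) (hx j).le (abs_nonneg _) (abs_nonneg _)
        _ = m * R * |c i| := by simp; ring
    rw [abs_le] at h1
    rw [abs_lt] at hp
    rw [hP, Finset.mem_Icc, Int.ceil_le, Int.le_floor]
    constructor <;> linarith
  have hcard : (P.card : ℝ) ≤ 2 * T + 1 := by
    rw [hP, Int.card_Icc]
    have h1 := Int.floor_le (-d + T)
    have h2 := Int.le_ceil (-d - T)
    rcases le_total 0 (⌊-d + T⌋ + 1 - ⌈-d - T⌉) with h | h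
    · have h3 : (((⌊-d + T⌋ + 1 - ⌈-d - T⌉).toNat : ℤ) : ℝ)
          = ((⌊-d + T⌋ + 1 - ⌈-d - T⌉ : ℤ) : ℝ) := by
        rw [Int.toNat_of_nonneg h]
      push_cast at h3
      linarith
    · rw [Int.toNat_of_nonpos h]
      push_cast; linarith
  refine (measure_mono hsub).trans ((measure_biUnion_finset_le _ _).trans ?_)
  refine (Finset.sum_le_sum fun (p : ℤ) _ =>
    volume_slab_le c (d + (p : ℝ)) ε R hR i (abs_pos.1 hci)).trans ?_
  rw [Finset.sum_const, nsmul_eq_mul, ← ENNReal.ofReal_natCast,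
    ← ENNReal.ofReal_mul (Nat.cast_nonneg _)]
  refine ENNReal.ofReal_le_ofReal ?_
  have h4 : (2 * T + 1) / |c i| ≤ 2 * m * R + 3 / κ := by
    have : (2 * T + 1) / |c i| = 2 * m * R + 3 / |c i| := by
      rw [hT]; field_simp; ring
    rw [this]
    gcongr
  calc (P.card : ℝ) * ((2 * R) ^ (m - 1) * (2 * ε) / |c i|)
      ≤ (2 * T + 1) * ((2 * R) ^ (m - 1) * (2 * ε) / |c i|) := by gcongr
    _ = (2 * R) ^ (m - 1) * 2 * ((2 * T + 1) / |c i|) * ε := by ring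
    _ ≤ _ := by gcongr

lemma ENNReal.tsum_prod_fin_eq_pow (f : ℤ → ENNReal) (n : ℕ) :
    ∑' q : Fin n → ℤ, ∏ i, f (q i) = (∑' z, f z) ^ n := by
  induction n with
  | zero => simp [tsum_fintype]
  | succ n ih =>
    rw [← (Fin.consEquiv fun _ : Fin (n + 1) => ℤ).tsum_eq, ENNReal.tsum_prod', pow_succ']
    simp only [Fin.consEquiv, Equiv.coe_fn_mk, Fin.prod_univ_succ, Fin.cons_zero, Fin.cons_succ]
    simp_rw [ENNReal.tsum_mul_left, ih, ENNReal.tsum_mul_right]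

lemma one_le_prodTimes_factor (z : ℤ) : (1 : ℝ) ≤ if z = 0 then 1 else |(z : ℝ)| := by
  split_ifs with h
  · exact le_rfl
  · exact_mod_cast Int.one_le_abs h

lemma one_le_prodTimes {n : ℕ} (q : Fin n → ℤ) : 1 ≤ prodTimes q :=
  Finset.prod_induction _ (fun x : ℝ => 1 ≤ x) (fun _ _ => one_le_mul_of_one_le_of_one_le) le_rfl
    fun i _ => one_le_prodTimes_factor (q i)

lemma tsum_prodTimes_rpow_ne_top (n : ℕ) {η : ℝ} (hη : 1 < η) :
    ∑' q : Fin n → ℤ, ENNReal.ofReal (prodTimes q ^ (-η)) ≠ ⊤ := by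
  have h1 : ∀ q : Fin n → ℤ, ENNReal.ofReal (prodTimes q ^ (-η))
      = ∏ i, ENNReal.ofReal ((if q i = 0 then 1 else |(q i : ℝ)|) ^ (-η)) := by
    intro q
    have h0 : ∀ i, (0 : ℝ) ≤ if q i = 0 then 1 else |(q i : ℝ)| := fun i =>
      zero_le_one.trans (one_le_prodTimes_factor _)
    rw [prodTimes, ← Real.finsetProd_rpow _ _ (fun i _ => h0 i),
      ENNReal.ofReal_prod_of_nonneg (fun i _ => Real.rpow_nonneg (h0 i) _)]
  simp_rw [h1]
  rw [ENNReal.tsum_prod_fin_eq_pow fun z : ℤ =>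
    ENNReal.ofReal ((if z = 0 then 1 else |(z : ℝ)|) ^ (-η))]
  refine ENNReal.pow_ne_top ?_
  have h2 : Summable fun z : ℤ => ((if z = 0 then 1 else |(z : ℝ)|) : ℝ) ^ (-η) := by
    refine (Real.summable_abs_int_rpow hη).congr_cofinite ?_
    refine (Set.finite_singleton (0 : ℤ)).subset fun z hz => ?_
    by_contra h0
    exact hz (by simp [show z ≠ 0 from h0])
  exact h2.tsum_ofReal_ne_top

lemma exists_abs_sum_add_lt_one_div_pow {n N : ℕ} (hn : 1 ≤ n) (hN : 1 ≤ N) (y : Fin n → ℝ) :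
    ∃ q : Fin n → ℤ, q ≠ 0 ∧ (∀ i, |q i| ≤ N) ∧
      ∃ p : ℤ, |(∑ i, (q i : ℝ) * y i) + (p : ℝ)| < 1 / (N : ℝ) ^ n := by
  classical
  have hN0 : (0 : ℝ) < (N : ℝ) ^ n := by positivity
  let g : (Fin n → ℕ) → ℝ := fun u => Int.fract (∑ i, (u i : ℝ) * y i)
  let S : Finset (Fin n → ℕ) := Fintype.piFinset fun _ => Finset.range (N + 1)
  have hcard : (Finset.range (N ^ n)).card < S.card := by
    simp only [S, Finset.card_range, Fintype.card_piFinset, Finset.prod_const,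
      Finset.card_univ, Fintype.card_fin]
    exact Nat.pow_lt_pow_left N.lt_succ_self (by omega)
  have hmaps : ∀ u ∈ S, ⌊(N : ℝ) ^ n * g u⌋₊ ∈ Finset.range (N ^ n) := by
    intro u _
    rw [Finset.mem_range, Nat.floor_lt (mul_nonneg hN0.le (Int.fract_nonneg _))]
    push_cast
    exact mul_lt_of_lt_one_right hN0 (Int.fract_lt_one _)
  obtain ⟨u, hu, w, hw, hne, huw⟩ := Finset.exists_ne_map_eq_of_card_lt_of_maps_to hcard hmaps
  refine ⟨fun i => (u i : ℤ) - w i, ?_, fun i => ?_,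
    ⌊∑ i, (w i : ℝ) * y i⌋ - ⌊∑ i, (u i : ℝ) * y i⌋, ?_⟩
  · intro h
    refine hne (funext fun i => ?_)
    have := congrFun h i
    simp only [Pi.zero_apply] at this
    omega
  · have h1 := Fintype.mem_piFinset.1 hu i
    have h2 := Fintype.mem_piFinset.1 hw i
    rw [Finset.mem_range] at h1 h2
    rw [abs_le]; constructor <;> dsimp only <;> omega
  · have h1 : (∑ i, (((u i : ℤ) - w i : ℤ) : ℝ) * y i)
        + ((⌊∑ i, (w i : ℝ) * y i⌋ - ⌊∑ i, (u i : ℝ) * y i⌋ : ℤ) : ℝ) = g u - g w := by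
      simp only [g, Int.fract]
      push_cast
      simp only [sub_mul, Finset.sum_sub_distrib]
      ring
    rw [h1]
    have h2 := Nat.floor_le (mul_nonneg hN0.le (Int.fract_nonneg (∑ i, (u i : ℝ) * y i)))
    have h3 := Nat.floor_le (mul_nonneg hN0.le (Int.fract_nonneg (∑ i, (w i : ℝ) * y i)))
    have h4 := Nat.lt_floor_add_one ((N : ℝ) ^ n * g u)
    have h5 := Nat.lt_floor_add_one ((N : ℝ) ^ n * g w)
    rw [lt_div_iff₀ hN0, show |g u - g w| * (N : ℝ) ^ n = |(g u - g w) * (N : ℝ) ^ n| by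
      rw [abs_mul, abs_of_pos hN0], abs_lt]
    change (⌊(N : ℝ) ^ n * g u⌋₊ : ℝ) ≤ (N : ℝ) ^ n * g u at h2
    change (⌊(N : ℝ) ^ n * g w⌋₊ : ℝ) ≤ (N : ℝ) ^ n * g w at h3
    rw [huw] at h2 h4
    constructor <;> nlinarith

/-- The integer vectors witnessing that `v` is a multiplicative exponent of `y`. -/
def approxSet {n : ℕ} (y : Fin n → ℝ) (v : ℝ) : Set (Fin n → ℤ) :=
  {q : Fin n → ℤ | ∃ p : ℤ, |(∑ i, (q i : ℝ) * y i) + (p : ℝ)| <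
      (prodTimes q) ^ (-(v / (n : ℝ)))}

lemma approxSet_anti {n : ℕ} (y : Fin n → ℝ) {v w : ℝ} (h : v ≤ w) :
    approxSet y w ⊆ approxSet y v := by
  rintro q ⟨p, hp⟩
  refine ⟨p, hp.trans_le ?_⟩
  exact Real.rpow_le_rpow_of_exponent_le (one_le_prodTimes q)
    (neg_le_neg (div_le_div_of_nonneg_right h (Nat.cast_nonneg n)))

lemma le_omegaT {n : ℕ} {y : Fin n → ℝ} {v : ℝ} (h : (approxSet y v).Infinite) :
    (v : EReal) ≤ omegaT y :=
  le_sSup ⟨v, rfl, h⟩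

lemma approxSet_infinite_of_lt_omegaT {n : ℕ} {y : Fin n → ℝ} {v : ℝ}
    (h : (v : EReal) < omegaT y) : (approxSet y v).Infinite := by
  obtain ⟨_, ⟨w, rfl, hw⟩, hvw⟩ := lt_sSup_iff.1 h
  exact Set.Infinite.mono (approxSet_anti y (EReal.coe_lt_coe_iff.1 hvw).le) hw

/-- Dirichlet's theorem. -/
lemma approxSet_infinite {n : ℕ} (hn : 1 ≤ n) (y : Fin n → ℝ) :
    (approxSet y n).Infinite := by
  have hn0 : (0 : ℝ) < n := by exact_mod_cast hn
  by_cases hex : ∃ q : Fin n → ℤ, q ≠ 0 ∧ ∃ p : ℤ, (∑ i, (q i : ℝ) * y i) + (p : ℝ) = 0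
  · obtain ⟨q, hq, p, hp⟩ := hex
    refine Set.infinite_of_injective_forall_mem (f := fun k : ℤ => fun i => k * q i) ?_ ?_
    · intro k l hkl
      obtain ⟨i, hi⟩ := Function.ne_iff.1 hq
      exact mul_right_cancel₀ hi (congrFun hkl i)
    · intro k
      refine ⟨k * p, ?_⟩
      have : (∑ i, ((k * q i : ℤ) : ℝ) * y i) + ((k * p : ℤ) : ℝ)
          = k * ((∑ i, (q i : ℝ) * y i) + p) := by
        rw [mul_add, Finset.mul_sum]; push_cast
        congr 1
        exact Finset.sum_congr rfl fun i _ => by ring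
      rw [this, hp, mul_zero, abs_zero]
      exact Real.rpow_pos_of_pos (zero_lt_one.trans_le (one_le_prodTimes _)) _
  · push Not at hex
    intro hfin
    set S : (Fin n → ℤ) → ℝ := fun q => ∑ i, (q i : ℝ) * y i with hS
    have h1 : ∀ᶠ η in nhdsWithin (0 : ℝ) (Ioi 0), ∀ q ∈ approxSet y n, q ≠ 0 →
        η ≤ |S q - round (S q)| := by
      rw [eventually_all_finite hfin]
      intro q _
      by_cases hq : q = 0
      · simp [hq]
      · have h2 : 0 < |S q - round (S q)| := by
          refine abs_pos.2 ?_
          have := hex q hq (-round (S q))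
          push_cast at this
          rwa [← sub_eq_add_neg] at this
        filter_upwards [(eventually_le_nhds h2).filter_mono nhdsWithin_le_nhds] with η hη _
          using hη
    obtain ⟨η, hη, hη0⟩ := (h1.and self_mem_nhdsWithin).exists
    obtain ⟨N, hN⟩ := exists_nat_gt (1 / η)
    have hη0' : (0 : ℝ) < η := hη0
    have hN0 : (0 : ℝ) < N := (one_div_pos.2 hη0').trans hN
    have hN1 : 1 ≤ N := by exact_mod_cast hN0
    obtain ⟨q, hq, hqN, p, hp⟩ := exists_abs_sum_add_lt_one_div_pow hn hN1 y
    have hprod : prodTimes q ≤ (N : ℝ) ^ n := by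
      calc prodTimes q ≤ ∏ _i : Fin n, (N : ℝ) := by
            refine Finset.prod_le_prod
              (fun i _ => zero_le_one.trans (one_le_prodTimes_factor _)) fun i _ => ?_
            split_ifs
            · exact_mod_cast hN1
            · exact_mod_cast hqN i
        _ = _ := by simp
    have hmem : q ∈ approxSet y n := by
      refine ⟨p, hp.trans_le ?_⟩
      rw [div_self hn0.ne', Real.rpow_neg_one, one_div]
      exact inv_anti₀ (zero_lt_one.trans_le (one_le_prodTimes _)) hprod
    have h3 := hη q hmem hq
    have h4 : |S q - round (S q)| ≤ |S q + p| := by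
      have := round_le (S q) (-p)
      rwa [Int.cast_neg, sub_neg_eq_add] at this
    have h5 : 1 / (N : ℝ) ^ n ≤ 1 / N := by
      refine one_div_le_one_div_of_le hN0 ?_
      exact le_self_pow₀ (by exact_mod_cast hN1) (by omega)
    have h6 : 1 / (N : ℝ) < η := by
      rw [div_lt_iff₀ hN0]
      rwa [div_lt_iff₀ hη0', mul_comm] at hN
    linarith
lemma prodTimes_le_pow {n : ℕ} {J : Finset (Fin n)} {q : Fin n → ℤ} {U : ℝ}
    (hJ : ∀ i ∉ J, q i = 0) (hU : 1 ≤ U) (h : ∀ i ∈ J, |(q i : ℝ)| ≤ U) :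
    prodTimes q ≤ U ^ J.card := by
  classical
  calc prodTimes q ≤ ∏ i, if i ∈ J then U else 1 := by
        refine Finset.prod_le_prod
          (fun i _ => zero_le_one.trans (one_le_prodTimes_factor _)) fun i _ => ?_
        by_cases hi : i ∈ J
        · rw [if_pos hi]; split_ifs
          · exact hU
          · exact h i hi
        · simp [hi, hJ i hi]
    _ = _ := by rw [Finset.prod_ite_mem]; simp

lemma pow_le_prodTimes {n : ℕ} {J : Finset (Fin n)} {q : Fin n → ℤ} {l : ℝ}
    (hl : 0 < l) (h : ∀ i ∈ J, l ≤ |(q i : ℝ)|) : l ^ J.card ≤ prodTimes q := by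
  classical
  calc l ^ J.card = ∏ i, if i ∈ J then l else 1 := by rw [Finset.prod_ite_mem]; simp
    _ ≤ prodTimes q := by
        refine Finset.prod_le_prod (fun i _ => by split_ifs <;> positivity) fun i _ => ?_
        by_cases hi : i ∈ J
        · have h1 := h i hi
          have h2 : q i ≠ 0 := by
            intro h0
            rw [h0] at h1; simp at h1; linarith
          simpa [hi, h2] using h1
        · simpa [hi] using one_le_prodTimes_factor (q i)

lemma abs_le_prodTimes {n : ℕ} (q : Fin n → ℤ) {i : Fin n} (hi : q i ≠ 0) :
    |(q i : ℝ)| ≤ prodTimes q := by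
  have := pow_le_prodTimes (q := q) (J := {i}) (abs_pos.2 (Int.cast_ne_zero.2 hi)) (by simp)
  simpa using this

/-- The point over `x` of the graph of `x ↦ a ⬝ x + b`. -/
noncomputable def graphPt {m : ℕ} (a : Fin m → ℝ) (b : ℝ) (x : Fin m → ℝ) : Fin (m + 1) → ℝ :=
  Fin.snoc x (∑ i, a i * x i + b)

lemma sum_mul_graphPt {m : ℕ} (a : Fin m → ℝ) (b : ℝ) (x : Fin m → ℝ) (q : Fin (m + 1) → ℤ)
    (p : ℤ) :
    (∑ i, (q i : ℝ) * graphPt a b x i) + (p : ℝ)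
      = ∑ j, ((q (Fin.last m) : ℝ) * a j + q j.castSucc) * x j
        + ((q (Fin.last m) : ℝ) * b + p) := by
  simp only [graphPt, Fin.sum_univ_castSucc, Fin.snoc_castSucc, Fin.snoc_last, add_mul,
    Finset.sum_add_distrib, mul_add, Finset.mul_sum, mul_assoc]
  ring

/-- The coefficients of the graph, its constant term included. -/
noncomputable def graphCoeff {m : ℕ} (a : Fin m → ℝ) (b : ℝ) : Fin (m + 1) → ℝ := Fin.snoc a b

/-- The coordinates involved in approximating the graph itself. -/
noncomputable def graphSupport {m : ℕ} (a : Fin m → ℝ) : Finset (Fin (m + 1)) :=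
  insert (Fin.last m) ((Finset.univ.filter fun i => a i ≠ 0).map Fin.castSuccEmb)

/-- The integer vector with last coordinate `z` whose linear form on the graph is smallest. -/
noncomputable def graphVec {m : ℕ} (a : Fin m → ℝ) (z : ℤ) : Fin (m + 1) → ℤ :=
  Fin.snoc (fun i => -round (z * a i)) z

section graph

variable {m : ℕ} {a : Fin m → ℝ} {b : ℝ}

lemma last_mem_graphSupport : Fin.last m ∈ graphSupport a := Finset.mem_insert_self _ _

lemma castSucc_mem_graphSupport {i : Fin m} : i.castSucc ∈ graphSupport a ↔ a i ≠ 0 := by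
  simp [graphSupport, Fin.castSucc_ne_last]

lemma graphSupport_card_pos : 0 < (graphSupport a).card :=
  Finset.card_pos.2 ⟨_, last_mem_graphSupport⟩

lemma graphVec_injective : Function.Injective (graphVec a) := by
  intro z w h
  simpa [graphVec] using congrFun h (Fin.last m)

lemma roundErr_graphCoeff_castSucc (N : ℕ) (i : Fin m) :
    roundErr (graphCoeff a b) N i.castSucc = N * a i - round (N * a i) := by
  simp [roundErr, graphCoeff]

lemma roundErr_graphCoeff_last (N : ℕ) :
    roundErr (graphCoeff a b) N (Fin.last m) = N * b - round (N * b) := by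
  simp [roundErr, graphCoeff]

lemma approxSet_graphPt_infinite {t v : ℝ}
    (hinf : {N : ℕ | distInt (graphCoeff a b) N < (N : ℝ) ^ (-t)}.Infinite) (hv : 0 < v)
    (hvt : (graphSupport a).card * (v / (m + 1 : ℕ)) < t) (x : Fin m → ℝ) :
    (approxSet (graphPt a b x) v).Infinite := by
  set s := (graphSupport a).card with hs
  set τ : ℝ := s * (v / (m + 1 : ℕ)) with hτ
  set C : ℝ := 1 + ∑ i, |x i| with hC
  set U : ℝ := 1 + ∑ i, |a i| with hU
  have hC0 : 0 < C := by positivity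
  have hU1 : 1 ≤ U := le_add_of_nonneg_right (Finset.sum_nonneg fun _ _ => abs_nonneg _)
  have hU0 : 0 < U := zero_lt_one.trans_le hU1
  have hlarge : ∀ᶠ N : ℕ in atTop, 1 ≤ N ∧ C * (N : ℝ) ^ (-t) ≤ (U * N) ^ (-τ) := by
    have h1 := ((tendsto_rpow_atTop (sub_pos.2 hvt)).comp
      tendsto_natCast_atTop_atTop).eventually_ge_atTop (C * U ^ τ)
    filter_upwards [eventually_ge_atTop 1, h1] with N hN h2
    refine ⟨hN, ?_⟩
    have hN0 : (0 : ℝ) < N := by exact_mod_cast hN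
    simp only [Function.comp] at h2
    rw [Real.rpow_sub hN0, le_div_iff₀ (Real.rpow_pos_of_pos hN0 _)] at h2
    rw [Real.rpow_neg hN0.le, Real.rpow_neg (by positivity), Real.mul_rpow hU0.le hN0.le,
      ← div_eq_mul_inv, inv_eq_one_div, div_le_div_iff₀ (by positivity) (by positivity)]
    linarith
  obtain ⟨N₀, hN₀⟩ := eventually_atTop.1 hlarge
  have hinf' := (hinf.sdiff (Set.finite_lt_nat N₀)).image
    (f := fun N : ℕ => graphVec a (N : ℤ)) (fun N _ N' _ h => by
      exact_mod_cast graphVec_injective h)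
  refine hinf'.mono ?_
  rintro _ ⟨N, ⟨hN, hNN⟩, rfl⟩
  obtain ⟨hN1, hle⟩ := hN₀ N (not_lt.1 hNN)
  have hN0 : (1 : ℝ) ≤ N := by exact_mod_cast hN1
  refine ⟨-round (N * b), ?_⟩
  rw [sum_mul_graphPt]
  have hform : ∑ j, (((graphVec a (N : ℤ) (Fin.last m) : ℤ) : ℝ) * a j
        + ((graphVec a (N : ℤ) j.castSucc : ℤ) : ℝ)) * x j
        + (((graphVec a (N : ℤ) (Fin.last m) : ℤ) : ℝ) * b + ((-round (N * b) : ℤ) : ℝ))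
      = ∑ j, roundErr (graphCoeff a b) N j.castSucc * x j
        + roundErr (graphCoeff a b) N (Fin.last m) := by
    simp only [roundErr_graphCoeff_castSucc, roundErr_graphCoeff_last, graphVec,
      Fin.snoc_castSucc, Fin.snoc_last]
    push_cast
    simp only [← sub_eq_add_neg]
  rw [hform]
  have h1 : |∑ j, roundErr (graphCoeff a b) N j.castSucc * x j
        + roundErr (graphCoeff a b) N (Fin.last m)| ≤ C * distInt (graphCoeff a b) N := by
    refine (abs_add_le _ _).trans ?_
    have h2 : |∑ j, roundErr (graphCoeff a b) N j.castSucc * x j|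
        ≤ ∑ j, distInt (graphCoeff a b) N * |x j| := by
      refine (Finset.abs_sum_le_sum_abs _ _).trans (Finset.sum_le_sum fun j _ => ?_)
      rw [abs_mul]
      exact mul_le_mul_of_nonneg_right (abs_roundErr_le_distInt _ _) (abs_nonneg _)
    rw [← Finset.mul_sum] at h2
    have h3 := abs_roundErr_le_distInt (β := graphCoeff a b) N (Fin.last m)
    rw [hC, add_mul, one_mul]
    linarith
  have h2 : prodTimes (graphVec a (N : ℤ)) ≤ (U * N) ^ s := by
    refine prodTimes_le_pow (J := graphSupport a) ?_ (one_le_mul_of_one_le_of_one_le hU1 hN0) ?_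
    · intro i
      induction i using Fin.lastCases with
      | last => intro h; exact absurd last_mem_graphSupport h
      | cast j =>
        intro h
        rw [castSucc_mem_graphSupport, not_not] at h
        simp [graphVec, h]
    · intro i _
      induction i using Fin.lastCases with
      | last =>
        simp only [graphVec, Fin.snoc_last, Int.cast_natCast, Nat.abs_cast]
        exact le_mul_of_one_le_left (by positivity) hU1
      | cast j =>
        simp only [graphVec, Fin.snoc_castSucc, Int.cast_natCast, Int.cast_neg, abs_neg]
        have h3 := abs_sub_round ((N : ℝ) * a j)
        have h4 := abs_sub_abs_le_abs_sub (round ((N : ℝ) * a j) : ℝ) (N * a j)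
        rw [abs_sub_comm, abs_mul, Nat.abs_cast] at h4
        have h5 : |a j| ≤ ∑ i, |a i| :=
          Finset.single_le_sum (f := fun i => |a i|) (fun i _ => abs_nonneg _) (Finset.mem_univ j)
        rw [hU]
        nlinarith [mul_le_mul_of_nonneg_left h5 (zero_le_one.trans hN0)]
  calc _ ≤ C * distInt (graphCoeff a b) N := h1
    _ < C * (N : ℝ) ^ (-t) := by gcongr; exact hN
    _ ≤ (U * N) ^ (-τ) := hle
    _ = ((U * N) ^ s) ^ (-(v / (m + 1 : ℕ))) := by
      rw [← Real.rpow_natCast, ← Real.rpow_mul (by positivity), hτ]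
      congr 1; ring
    _ ≤ _ := Real.rpow_le_rpow_of_nonpos
      (zero_lt_one.trans_le (one_le_prodTimes _)) h2 (neg_nonpos.2 (by positivity))

lemma round_eq_neg_of_abs_add_lt {u : ℝ} {k : ℤ} (h : |u + k| < 1 / 2) : round u = -k := by
  have h1 := abs_sub_round u
  have h2 : |((round u + k : ℤ) : ℝ)| < 1 := by
    have : ((round u + k : ℤ) : ℝ) = (u + k) - (u - round u) := by push_cast; ring
    rw [this]
    refine (abs_sub _ _).trans_lt ?_
    linarith
  have h3 : |round u + k| < 1 := by exact_mod_cast h2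
  have := Int.abs_lt_one_iff.1 h3
  omega

lemma tsum_volume_steep_ne_top (a : Fin m → ℝ) (b : ℝ) {v R κ : ℝ} (hv : (m + 1 : ℕ) < v)
    (hR : 0 ≤ R) (hκ : 0 < κ) :
    ∑' q : Fin (m + 1) → ℤ, volume {x : Fin m → ℝ |
      (∃ j, κ ≤ |(q (Fin.last m) : ℝ) * a j + q j.castSucc|) ∧ (∀ j, |x j| < R) ∧
      ∃ p : ℤ, |∑ j, ((q (Fin.last m) : ℝ) * a j + q j.castSucc) * x j
        + ((q (Fin.last m) : ℝ) * b + p)| < prodTimes q ^ (-(v / (m + 1 : ℕ)))} ≠ ⊤ := by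
  set C : ℝ := (2 * R) ^ (m - 1) * 2 * (2 * m * R + 3 / κ) with hC
  have hC0 : 0 ≤ C := by positivity
  have hη : 1 < v / (m + 1 : ℕ) := by
    rwa [one_lt_div (by positivity)]
  have hle : ∀ q : Fin (m + 1) → ℤ, volume {x : Fin m → ℝ |
      (∃ j, κ ≤ |(q (Fin.last m) : ℝ) * a j + q j.castSucc|) ∧ (∀ j, |x j| < R) ∧
      ∃ p : ℤ, |∑ j, ((q (Fin.last m) : ℝ) * a j + q j.castSucc) * x j
        + ((q (Fin.last m) : ℝ) * b + p)| < prodTimes q ^ (-(v / (m + 1 : ℕ)))}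
      ≤ ENNReal.ofReal C * ENNReal.ofReal (prodTimes q ^ (-(v / (m + 1 : ℕ)))) := by
    intro q
    by_cases hex : ∃ j, κ ≤ |(q (Fin.last m) : ℝ) * a j + q j.castSucc|
    · obtain ⟨j, hj⟩ := hex
      have : Nonempty (Fin m) := ⟨j⟩
      obtain ⟨i, hi⟩ := Finite.exists_max
        fun j : Fin m => |(q (Fin.last m) : ℝ) * a j + q j.castSucc|
      rw [← ENNReal.ofReal_mul hC0]
      refine (measure_mono ?_).trans (volume_slab_int_le
        (fun j : Fin m => (q (Fin.last m) : ℝ) * a j + q j.castSucc) (q (Fin.last m) * b) hR hκ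
        (Real.rpow_pos_of_pos (zero_lt_one.trans_le (one_le_prodTimes q)) _)
        (Real.rpow_le_one_of_one_le_of_nonpos (one_le_prodTimes q) (by linarith))
        i (hj.trans (hi j)) hi)
      exact fun x hx => hx.2
    · simp [hex]
  refine ne_top_of_le_ne_top ?_ (ENNReal.tsum_le_tsum hle)
  rw [ENNReal.tsum_mul_left]
  exact ENNReal.mul_ne_top ENNReal.ofReal_ne_top (tsum_prodTimes_rpow_ne_top _ hη)

lemma tsum_volume_flat_ne_top {t τ γ R : ℝ} (hst : ((graphSupport a).card : ℝ) ≤ t) (htτ : t < τ)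
    (hfin : {N : ℕ | distInt (graphCoeff a b) N < (N : ℝ) ^ (-t)}.Finite) (hγ : 0 < γ)
    (hR : 1 ≤ R) :
    ∃ N₀ : ℕ, ∑' N : ℕ, volume {x : Fin m → ℝ | N₀ ≤ N ∧ (∀ j, |x j| < R) ∧
      |∑ j, roundErr (graphCoeff a b) N j.castSucc * x j
        + roundErr (graphCoeff a b) N (Fin.last m)| < (γ * N) ^ (-τ)} ≠ ⊤ := by
  set β := graphCoeff a b with hβ
  have hβJ : ∀ i ∉ graphSupport a, β i = 0 := by
    intro i
    induction i using Fin.lastCases with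
    | last => intro h; exact absurd last_mem_graphSupport h
    | cast j =>
      intro h
      rw [castSucc_mem_graphSupport, not_not] at h
      simp [hβ, graphCoeff, h]
  have hR0 : 0 < R := zero_lt_one.trans_le hR
  obtain ⟨c, hc, hcN⟩ := exists_forall_mul_rpow_le_distInt hfin
  have hlarge : ∀ᶠ N : ℕ in atTop, 1 ≤ N ∧ (γ * N) ^ (-τ) ≤ c * (N : ℝ) ^ (-t) / 2 := by
    have h1 := ((tendsto_rpow_atTop (sub_pos.2 htτ)).comp
      tendsto_natCast_atTop_atTop).eventually_ge_atTop (2 / (c * γ ^ τ))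
    filter_upwards [eventually_ge_atTop 1, h1] with N hN h2
    refine ⟨hN, ?_⟩
    have hN0 : (0 : ℝ) < N := by exact_mod_cast hN
    simp only [Function.comp] at h2
    rw [Real.rpow_sub hN0, div_le_div_iff₀ (by positivity) (Real.rpow_pos_of_pos hN0 _)] at h2
    rw [Real.rpow_neg hN0.le, Real.rpow_neg (by positivity), Real.mul_rpow hγ.le hN0.le,
      ← div_eq_mul_inv, div_div, inv_eq_one_div,
      div_le_div_iff₀ (by positivity) (by positivity)]
    linarith
  obtain ⟨N₀, hN₀⟩ := eventually_atTop.1 hlarge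
  refine ⟨N₀, ?_⟩
  set κ : ℝ := 1 / (2 * (m + 1) * R) with hκ
  have hκ0 : 0 < κ := by positivity
  have hκ1 : κ ≤ 1 := by
    rw [hκ, div_le_one (by positivity)]
    nlinarith [(Nat.cast_nonneg m : (0 : ℝ) ≤ m)]
  have hmκ : m * R * κ ≤ 1 / 2 := by
    rw [hκ, mul_one_div, div_le_div_iff₀ (by positivity) (by norm_num)]
    nlinarith [(Nat.cast_nonneg m : (0 : ℝ) ≤ m)]
  set C : ℝ := (2 * R) ^ (m - 1) * 2 * γ ^ (-τ) / κ with hC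
  have hC0 : 0 ≤ C := by positivity
  have hle : ∀ N : ℕ, volume {x : Fin m → ℝ | N₀ ≤ N ∧ (∀ j, |x j| < R) ∧
      |∑ j, roundErr β N j.castSucc * x j + roundErr β N (Fin.last m)| < (γ * N) ^ (-τ)}
      ≤ ENNReal.ofReal C * ENNReal.ofReal ((N : ℝ) ^ (-τ) * (distInt β N)⁻¹) := by
    intro N
    rcases Set.eq_empty_or_nonempty {x : Fin m → ℝ | N₀ ≤ N ∧ (∀ j, |x j| < R) ∧
      |∑ j, roundErr β N j.castSucc * x j + roundErr β N (Fin.last m)| < (γ * N) ^ (-τ)}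
      with he | ⟨x, hNN, hxR, hx⟩
    · simp [he]
    obtain ⟨hN1, hNc⟩ := hN₀ N hNN
    have hD := distInt_pos hfin hN1
    have hcD := hcN N hN1
    have hex : ∃ j : Fin m, κ * distInt β N ≤ |roundErr β N j.castSucc| := by
      by_contra! hcon
      have h1 : |∑ j, roundErr β N j.castSucc * x j| ≤ distInt β N / 2 := by
        calc _ ≤ ∑ j, |roundErr β N j.castSucc * x j| := Finset.abs_sum_le_sum_abs _ _
          _ ≤ ∑ _j : Fin m, κ * distInt β N * R := by
            refine Finset.sum_le_sum fun j _ => ?_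
            rw [abs_mul]
            exact mul_le_mul (hcon j).le (hxR j).le (abs_nonneg _) (by positivity)
          _ = m * R * κ * distInt β N := by simp; ring
          _ ≤ 1 / 2 * distInt β N := by gcongr
          _ = _ := by ring
      have h2 : distInt β N < distInt β N := by
        refine (pi_norm_lt_iff hD).2 fun i => ?_
        induction i using Fin.lastCases with
        | last =>
          rw [Real.norm_eq_abs]
          rw [abs_le] at h1
          rw [abs_lt] at hx ⊢
          constructor <;> linarith
        | cast j => exact (hcon j).trans_le (mul_le_of_le_one_left hD.le hκ1)
      exact lt_irrefl _ h2
    obtain ⟨j, hj⟩ := hex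
    have hj0 : 0 < |roundErr β N j.castSucc| := (mul_pos hκ0 hD).trans_le hj
    rw [← ENNReal.ofReal_mul hC0]
    refine (measure_mono fun x hx => hx.2).trans ((volume_slab_le
      (fun j : Fin m => roundErr β N j.castSucc) (roundErr β N (Fin.last m)) _ R hR0.le j
      (abs_pos.1 hj0)).trans (ENNReal.ofReal_le_ofReal ?_))
    have hN0 : (0 : ℝ) < N := by exact_mod_cast hN1
    rw [Real.mul_rpow hγ.le hN0.le]
    calc (2 * R) ^ (m - 1) * (2 * (γ ^ (-τ) * (N : ℝ) ^ (-τ))) / |roundErr β N j.castSucc|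
        ≤ (2 * R) ^ (m - 1) * (2 * (γ ^ (-τ) * (N : ℝ) ^ (-τ))) / (κ * distInt β N) := by gcongr
      _ = C * ((N : ℝ) ^ (-τ) * (distInt β N)⁻¹) := by
        rw [hC]; field_simp
  refine ne_top_of_le_ne_top ?_ (ENNReal.tsum_le_tsum hle)
  rw [ENNReal.tsum_mul_left]
  exact ENNReal.mul_ne_top ENNReal.ofReal_ne_top
    (summable_rpow_mul_inv_distInt hβJ hst htτ hfin).tsum_ofReal_ne_top

lemma exists_forall_two_mul_le_abs (a : Fin m → ℝ) :
    ∃ γ : ℝ, 0 < γ ∧ γ ≤ 1 ∧ ∀ i, a i ≠ 0 → 2 * γ ≤ |a i| := by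
  have h1 : ∀ᶠ γ in nhdsWithin (0 : ℝ) (Ioi 0), ∀ i, a i ≠ 0 → 2 * γ ≤ |a i| := by
    rw [eventually_all]
    intro i
    by_cases hi : a i = 0
    · simp [hi]
    · filter_upwards [(eventually_le_nhds (half_pos (abs_pos.2 hi))).filter_mono
        nhdsWithin_le_nhds] with γ hγ _
      linarith
  have h2 : ∀ᶠ γ in nhdsWithin (0 : ℝ) (Ioi 0), γ ≤ 1 :=
    (eventually_le_nhds zero_lt_one).filter_mono nhdsWithin_le_nhds
  obtain ⟨γ, ⟨h, h'⟩, h0⟩ := ((h1.and h2).and self_mem_nhdsWithin).exists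
  exact ⟨γ, h0, h', h⟩

/-- The coefficients of a small value of the linear form of `q` on the graph at a bounded point
are rounding errors when the linear part of the form is small. -/
lemma flat_form_eq {v R κ γ : ℝ} (hv : (m + 1 : ℕ) < v) (hκ0 : 0 < κ) (hκ : κ ≤ 1 / 4)
    (hmκ : m * R * κ ≤ 1 / 4) (hγ0 : 0 < γ) (hγ1 : γ ≤ 1)
    (hγ : ∀ i, a i ≠ 0 → 2 * γ ≤ |a i|) {x : Fin m → ℝ} (hx : ∀ j, |x j| < R)
    {q : Fin (m + 1) → ℤ} {p : ℤ}
    (hq : ∀ j : Fin m, |(q (Fin.last m) : ℝ) * a j + q j.castSucc| < κ)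
    (hN4 : 4 ≤ (q (Fin.last m)).natAbs) (hNγ : 1 ≤ γ * (q (Fin.last m)).natAbs)
    (hp : |∑ j, ((q (Fin.last m) : ℝ) * a j + q j.castSucc) * x j
        + ((q (Fin.last m) : ℝ) * b + p)| < prodTimes q ^ (-(v / (m + 1 : ℕ)))) :
    |∑ j, roundErr (graphCoeff a b) (q (Fin.last m)).natAbs j.castSucc * x j
        + roundErr (graphCoeff a b) (q (Fin.last m)).natAbs (Fin.last m)|
      < (γ * (q (Fin.last m)).natAbs) ^ (-((graphSupport a).card * (v / (m + 1 : ℕ)))) := by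
  set z := q (Fin.last m) with hz
  set N := z.natAbs with hN
  have hη : 1 < v / (m + 1 : ℕ) := by rwa [one_lt_div (by positivity)]
  have hN4' : (4 : ℝ) ≤ N := by exact_mod_cast hN4
  have hNabs : (N : ℝ) = |(z : ℝ)| := by rw [hN, Nat.cast_natAbs, Int.cast_abs]
  have hz0 : z ≠ 0 := by
    intro h; rw [hN, h] at hN4; simp at hN4
  have hprodN : (N : ℝ) ≤ prodTimes q := by
    rw [hNabs]; exact abs_le_prodTimes q hz0
  have hε : prodTimes q ^ (-(v / (m + 1 : ℕ))) ≤ 1 / 4 := by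
    calc prodTimes q ^ (-(v / (m + 1 : ℕ))) ≤ prodTimes q ^ (-1 : ℝ) :=
          Real.rpow_le_rpow_of_exponent_le (one_le_prodTimes q) (by linarith)
      _ = 1 / prodTimes q := by rw [Real.rpow_neg_one, one_div]
      _ ≤ 1 / 4 := one_div_le_one_div_of_le (by norm_num) (hN4'.trans hprodN)
  have hsum : |∑ j, ((z : ℝ) * a j + q j.castSucc) * x j| ≤ 1 / 4 := by
    calc _ ≤ ∑ j, |((z : ℝ) * a j + q j.castSucc) * x j| := Finset.abs_sum_le_sum_abs _ _
      _ ≤ ∑ _j : Fin m, κ * R := by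
        refine Finset.sum_le_sum fun j _ => ?_
        rw [abs_mul]
        exact mul_le_mul (hq j).le (hx j).le (abs_nonneg _) hκ0.le
      _ = m * R * κ := by simp; ring
      _ ≤ 1 / 4 := hmκ
  have hd : |(z : ℝ) * b + p| < 1 / 2 := by
    rw [abs_le] at hsum
    rw [abs_lt] at hp ⊢
    constructor <;> linarith
  obtain ⟨σ, hσ, hzσ⟩ : ∃ σ : ℤ, |(σ : ℝ)| = 1 ∧ (N : ℝ) = σ * z := by
    rcases Int.natAbs_eq z with h | h
    · refine ⟨1, by simp, ?_⟩
      have : (z : ℝ) = ((z.natAbs : ℤ) : ℝ) := congrArg _ h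
      rw [Int.cast_natCast] at this
      rw [this]; simp [hN]
    · refine ⟨-1, by simp, ?_⟩
      have : (z : ℝ) = ((-(z.natAbs : ℤ) : ℤ) : ℝ) := congrArg _ h
      rw [Int.cast_neg, Int.cast_natCast] at this
      rw [this]; simp [hN]
  have herr : ∀ (u : ℝ) (k : ℤ), |(z : ℝ) * u + k| < 1 / 2 →
      N * u - round (N * u) = σ * (z * u + k) := by
    intro u k h
    have h1 : |(N : ℝ) * u + ((σ * k : ℤ) : ℝ)| < 1 / 2 := by
      have : (N : ℝ) * u + ((σ * k : ℤ) : ℝ) = σ * (z * u + k) := by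
        rw [hzσ]; push_cast; ring
      rwa [this, abs_mul, hσ, one_mul]
    rw [round_eq_neg_of_abs_add_lt h1, hzσ]; push_cast; ring
  have hform : ∑ j, roundErr (graphCoeff a b) N j.castSucc * x j
        + roundErr (graphCoeff a b) N (Fin.last m)
      = σ * (∑ j, ((z : ℝ) * a j + q j.castSucc) * x j + ((z : ℝ) * b + p)) := by
    rw [roundErr_graphCoeff_last, herr b p hd, mul_add (σ : ℝ) (∑ j, _), Finset.mul_sum]
    congr 1
    refine Finset.sum_congr rfl fun j _ => ?_
    rw [roundErr_graphCoeff_castSucc, herr (a j) (q j.castSucc) ((hq j).trans (by linarith)),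
      mul_assoc]
  rw [hform, abs_mul, hσ, one_mul]
  refine hp.trans_le ?_
  have hprod : (γ * N) ^ (graphSupport a).card ≤ prodTimes q := by
    refine pow_le_prodTimes (by linarith) fun i => ?_
    induction i using Fin.lastCases with
    | last =>
      intro _
      rw [← hz, ← hNabs]
      exact mul_le_of_le_one_left (Nat.cast_nonneg _) hγ1
    | cast j =>
      intro hj
      have h1 := hγ j (castSucc_mem_graphSupport.1 hj)
      have h2 := hq j
      have h3 := abs_sub_abs_le_abs_sub ((z : ℝ) * a j) (-(q j.castSucc : ℝ))
      rw [sub_neg_eq_add, abs_neg, abs_mul, ← hNabs] at h3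
      nlinarith [mul_le_mul_of_nonneg_left h1 (Nat.cast_nonneg (α := ℝ) N)]
  calc prodTimes q ^ (-(v / (m + 1 : ℕ)))
      ≤ ((γ * N) ^ (graphSupport a).card) ^ (-(v / (m + 1 : ℕ))) :=
        Real.rpow_le_rpow_of_nonpos (by positivity) hprod (by linarith)
    _ = _ := by
      rw [← Real.rpow_natCast, ← Real.rpow_mul (by positivity)]
      congr 1; ring

lemma ae_approxSet_graphPt_finite {t v R : ℝ} (hv : (m + 1 : ℕ) < v)
    (hst : ((graphSupport a).card : ℝ) ≤ t)
    (htv : t < (graphSupport a).card * (v / (m + 1 : ℕ)))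
    (hfin : {N : ℕ | distInt (graphCoeff a b) N < (N : ℝ) ^ (-t)}.Finite) (hR : 1 ≤ R) :
    ∀ᵐ x : Fin m → ℝ, (∀ j, |x j| < R) → (approxSet (graphPt a b x) v).Finite := by
  have hR0 : 0 < R := zero_lt_one.trans_le hR
  obtain ⟨γ, hγ0, hγ1, hγ⟩ := exists_forall_two_mul_le_abs a
  set κ : ℝ := 1 / (4 * (m + 1) * R) with hκ
  have hκ0 : 0 < κ := by positivity
  have hκ1 : κ ≤ 1 / 4 := by
    rw [hκ]
    refine one_div_le_one_div_of_le (by norm_num) ?_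
    nlinarith [(Nat.cast_nonneg m : (0 : ℝ) ≤ m)]
  have hmκ : m * R * κ ≤ 1 / 4 := by
    rw [hκ, mul_one_div, div_le_div_iff₀ (by positivity) (by norm_num)]
    nlinarith [(Nat.cast_nonneg m : (0 : ℝ) ≤ m)]
  obtain ⟨N₀, hB⟩ := tsum_volume_flat_ne_top hst htv hfin hγ0 hR
  obtain ⟨N₁, hN₁⟩ := exists_nat_gt (1 / γ)
  filter_upwards [ae_finite_setOfPred_mem (tsum_volume_steep_ne_top a b hv hR0.le hκ0),
    ae_finite_setOfPred_mem hB] with x hxA hxB hx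
  have hZ : {z : ℤ | z.natAbs < N₀ + N₁ + 4 ∨ z.natAbs ∈ {N : ℕ | x ∈ {x : Fin m → ℝ |
      N₀ ≤ N ∧ (∀ j, |x j| < R) ∧ |∑ j, roundErr (graphCoeff a b) N j.castSucc * x j
        + roundErr (graphCoeff a b) N (Fin.last m)|
        < (γ * N) ^ (-((graphSupport a).card * (v / (m + 1 : ℕ))))}}}.Finite := by
    obtain ⟨M, hM⟩ := hxB.bddAbove
    refine (Set.finite_Icc (-((M + N₀ + N₁ + 4 : ℕ) : ℤ)) ((M + N₀ + N₁ + 4 : ℕ) : ℤ)).subset ?_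
    rintro z (hz | hz)
    · rw [Set.mem_Icc]; omega
    · have := hM hz
      rw [Set.mem_Icc]; omega
  refine (hxA.union (hZ.image (graphVec a))).subset ?_
  rintro q ⟨p, hp⟩
  rw [sum_mul_graphPt] at hp
  by_cases hq : ∃ j, κ ≤ |(q (Fin.last m) : ℝ) * a j + q j.castSucc|
  · exact Or.inl ⟨hq, hx, p, hp⟩
  push Not at hq
  refine Or.inr ⟨q (Fin.last m), ?_, ?_⟩
  · by_cases hlt : (q (Fin.last m)).natAbs < N₀ + N₁ + 4
    · exact Or.inl hlt
    · refine Or.inr ⟨by omega, hx, flat_form_eq hv hκ0 hκ1 hmκ hγ0 hγ1 hγ hx hq (by omega) ?_ hp⟩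
      have h1 : (N₁ : ℝ) ≤ (q (Fin.last m)).natAbs := by
        exact_mod_cast (show N₁ ≤ (q (Fin.last m)).natAbs by omega)
      rw [div_lt_iff₀ hγ0] at hN₁
      nlinarith
  · funext i
    induction i using Fin.lastCases with
    | last => simp [graphVec]
    | cast j =>
      have := round_eq_neg_of_abs_add_lt ((hq j).trans (by linarith : κ < 1 / 2))
      simp [graphVec, this]

lemma volume_approxSet_graphPt_infinite_eq_zero {t v : ℝ} (hv : (m + 1 : ℕ) < v)
    (htv : t < (graphSupport a).card * (v / (m + 1 : ℕ)))
    (hfin : {N : ℕ | distInt (graphCoeff a b) N < (N : ℝ) ^ (-t)}.Finite) :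
    volume {x : Fin m → ℝ | (approxSet (graphPt a b x) v).Infinite} = 0 := by
  have hη : 1 < v / (m + 1 : ℕ) := by rwa [one_lt_div (by positivity)]
  have hs : (0 : ℝ) < (graphSupport a).card := by exact_mod_cast graphSupport_card_pos
  have hfin' : {N : ℕ | distInt (graphCoeff a b) N
      < (N : ℝ) ^ (-(max t (graphSupport a).card))}.Finite := by
    refine (hfin.union (Set.finite_singleton 0)).subset fun N hN => ?_
    rcases Nat.eq_zero_or_pos N with rfl | hpos
    · exact Or.inr rfl
    · refine Or.inl ((Set.mem_ofPred_eq ▸ hN : distInt _ N < _).trans_le ?_)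
      exact Real.rpow_le_rpow_of_exponent_le (by exact_mod_cast hpos)
        (neg_le_neg (le_max_left _ _))
  have hlt : max t (graphSupport a).card < (graphSupport a).card * (v / (m + 1 : ℕ)) :=
    max_lt htv (lt_mul_of_one_lt_right hs hη)
  have hae : ∀ᵐ x : Fin m → ℝ, ∀ R : ℕ, (∀ j, |x j| < (R : ℝ) + 1) →
      (approxSet (graphPt a b x) v).Finite :=
    ae_all_iff.2 fun R => ae_approxSet_graphPt_finite hv (le_max_right _ _) hlt hfin'
      (by linarith [(Nat.cast_nonneg R : (0 : ℝ) ≤ R)])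
  have hae' : ∀ᵐ x : Fin m → ℝ, ¬ (approxSet (graphPt a b x) v).Infinite := by
    filter_upwards [hae] with x hx
    obtain ⟨R, hR⟩ := exists_nat_gt ‖x‖
    exact Set.not_infinite.2 (hx R fun j => ((norm_le_pi_norm x j).trans_lt hR).trans (by simp))
  simpa only [ae_iff, not_not] using hae'

lemma measurableEmbedding_graphPt (a : Fin m → ℝ) (b : ℝ) :
    MeasurableEmbedding (graphPt a b) := by
  refine Continuous.measurableEmbedding ?_ ?_
  · refine continuous_pi fun i => ?_
    induction i using Fin.lastCases with
    | last => simp only [graphPt, Fin.snoc_last]; fun_prop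
    | cast j => simp only [graphPt, Fin.snoc_castSucc]; fun_prop
  · intro x y h
    funext j
    simpa [graphPt] using congrFun h j.castSucc

theorem omegaTMeas_map_graphPt (a : Fin m → ℝ) (b : ℝ) :
    omegaTMeas (Measure.map (graphPt a b) volume)
      = ⨅ y ∈ Set.range (graphPt a b), omegaT y := by
  have hmap : ∀ s, Measure.map (graphPt a b) volume s = volume (graphPt a b ⁻¹' s) :=
    (measurableEmbedding_graphPt a b).map_apply volume
  have hm0 : (0 : ℝ) < (m + 1 : ℕ) := by positivity
  have hs : (0 : ℝ) < (graphSupport a).card := by exact_mod_cast graphSupport_card_pos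
  apply le_antisymm
  · refine sSup_le ?_
    rintro _ ⟨v, rfl, hpos⟩
    refine le_iInf₂ ?_
    rintro _ ⟨x, rfl⟩
    have hdir : ((((m + 1 : ℕ) : ℝ)) : EReal) ≤ omegaT (graphPt a b x) :=
      le_omegaT (approxSet_infinite (by omega) _)
    rcases le_or_gt v ((m + 1 : ℕ) : ℝ) with hv | hv
    · exact (EReal.coe_le_coe_iff.2 hv).trans hdir
    rw [hmap] at hpos
    have hpos' : volume {x : Fin m → ℝ | (approxSet (graphPt a b x) v).Infinite} ≠ 0 :=
      (hpos.trans_le (measure_mono fun x hx => approxSet_infinite_of_lt_omegaT hx)).ne'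
    refine EReal.ge_of_forall_gt_iff_ge.1 fun w hw => ?_
    have hwv : max w ((m + 1 : ℕ) : ℝ) < v := max_lt (EReal.coe_lt_coe_iff.1 hw) hv
    obtain ⟨t, hwt, htv⟩ := exists_between
      (mul_lt_mul_of_pos_left (div_lt_div_of_pos_right hwv hm0) hs)
    have hinf : {N : ℕ | distInt (graphCoeff a b) N < (N : ℝ) ^ (-t)}.Infinite := fun hfin =>
      hpos' (volume_approxSet_graphPt_infinite_eq_zero hv htv hfin)
    exact (EReal.coe_le_coe_iff.2 (le_max_left _ _)).trans (le_omegaT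
      (approxSet_graphPt_infinite hinf (hm0.trans_le (le_max_right _ _)) hwt x))
  · refine EReal.ge_of_forall_gt_iff_ge.1 fun w hw => le_sSup ⟨w, rfl, ?_⟩
    rw [hmap]
    have huniv : graphPt a b ⁻¹' {y | (w : EReal) < omegaT y} = univ :=
      eq_univ_of_forall fun x => hw.trans_le (iInf₂_le _ ⟨x, rfl⟩)
    rw [huniv]
    exact Measure.measure_univ_pos.2 (NeZero.ne _)

end graph

theorem stmt11 (m r : ℕ) (hm : 1 ≤ m) (hrm : r ≤ m) (a : Fin r → ℝ)
    (ha : ∀ i, a i ≠ 0) (b : ℝ) :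
    omegaTMeas (Measure.map
        (fun x : Fin m → ℝ => Fin.snoc x (∑ i, a i * x (Fin.castLE hrm i) + b)) volume)
      = ⨅ y ∈ Set.range (fun x : Fin m → ℝ =>
          Fin.snoc x (∑ i, a i * x (Fin.castLE hrm i) + b)), omegaT y := by
  have hinj : Function.Injective (Fin.castLE hrm) := Fin.castLE_injective hrm
  have hgraph : (fun x : Fin m → ℝ =>
      (Fin.snoc x (∑ i, a i * x (Fin.castLE hrm i) + b) : Fin (m + 1) → ℝ))
      = graphPt (Function.extend (Fin.castLE hrm) a 0) b := by
    funext x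
    rw [graphPt, Fintype.sum_of_injective (Fin.castLE hrm) hinj _
      (fun i => Function.extend (Fin.castLE hrm) a 0 i * x i)]
    · intro i hi
      rw [Function.extend_apply' _ _ _ hi]; simp
    · intro i
      rw [hinj.extend_apply]
  rw [hgraph]
  exact omegaTMeas_map_graphPt _ _
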